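/- (Well-definedness of Algorithm 1.) Consider the sequences generated by Algorithm 1. Then for every k ≥ 0 the solution set S := {x : 0 ∈ T(x)} is contained in H_k ∩ W_k; in particular H_k ∩ W_k is a nonempty closed convex set, so the projection of x₀ onto H_k ∩ W_k defining x_{k+1} exists, and Algorithm 1 generates infinite sequences. -/

import Mathlib

open scoped RealInnerProductSpace
open Filter Topology

variable {H : Type*} [NormedAddCommGroup H] [InnerProductSpace ℝ H] [CompleteSpace H]

/-- A set-valued operator is monotone. -/
def IsMonotoneOp (T : H → Set H) : Prop :=
  ∀ x y u v, u ∈ T x → v ∈ T y → 0 ≤ ⟪u - v, x - y⟫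

/-- A set-valued operator is maximal monotone. -/
def IsMaxMonotoneOp (T : H → Set H) : Prop :=
  IsMonotoneOp T ∧ ∀ x v, (∀ y u, u ∈ T y → 0 ≤ ⟪u - v, y - x⟫) → v ∈ T x

/-- The ε-enlargement of a set-valued operator. -/
def enl (T : H → Set H) (ε : ℝ) (y : H) : Set H :=
  {v | ∀ z u, u ∈ T z → ⟪u - v, z - y⟫ ≥ -ε}

/-- Appendix A (well-definedness of Algorithm 1): S ⊆ H_k ∩ W_k, which is nonempty closed convex, and the projection of x₀ onto it exists. -/
theorem stmt19
    (T : H → Set H) (hT : IsMaxMonotoneOp T)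
    (hS : {z : H | (0 : H) ∈ T z}.Nonempty)
    (σ : ℝ) (hσ0 : 0 ≤ σ) (hσ1 : σ < 1)
    (α β lam ε : ℕ → ℝ)
    (hα : ∀ k, 0 ≤ α k) (hβ : ∀ k, 0 ≤ β k)
    (hlam : ∀ k, 0 < lam k) (hε : ∀ k, 0 ≤ ε k)
    (x w wt y v : ℕ → H)
    (hw : ∀ k, w k = x k + α k • (x k - x (k - 1)))
    (hwt : ∀ k, wt k = w k + β k • (w k - x 0))
    (hincl : ∀ k, v k ∈ enl T (ε k) (y k))
    (herr : ∀ k, ‖lam k • v k + y k - wt k‖ ^ 2 + 2 * lam k * ε k ≤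
      σ ^ 2 * (‖lam k • v k‖ ^ 2 + ‖y k - wt k‖ ^ 2))
    (hmem : ∀ k, ⟪x (k + 1) - y k, v k⟫ ≤ ε k ∧ ⟪x (k + 1) - x k, x 0 - x k⟫ ≤ 0)
    (hproj : ∀ k, ∀ z : H, ⟪z - y k, v k⟫ ≤ ε k → ⟪z - x k, x 0 - x k⟫ ≤ 0 →
      ‖x (k + 1) - x 0‖ ≤ ‖z - x 0‖) :
    ∀ k : ℕ,
      {z : H | (0 : H) ∈ T z} ⊆
        ({z : H | ⟪z - y k, v k⟫ ≤ ε k} ∩ {z : H | ⟪z - x k, x 0 - x k⟫ ≤ 0}) ∧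
      ({z : H | ⟪z - y k, v k⟫ ≤ ε k} ∩ {z : H | ⟪z - x k, x 0 - x k⟫ ≤ 0}).Nonempty ∧
      IsClosed ({z : H | ⟪z - y k, v k⟫ ≤ ε k} ∩ {z : H | ⟪z - x k, x 0 - x k⟫ ≤ 0}) ∧
      Convex ℝ ({z : H | ⟪z - y k, v k⟫ ≤ ε k} ∩ {z : H | ⟪z - x k, x 0 - x k⟫ ≤ 0}) ∧
      ∃ p ∈ ({z : H | ⟪z - y k, v k⟫ ≤ ε k} ∩ {z : H | ⟪z - x k, x 0 - x k⟫ ≤ 0}),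
        ∀ z ∈ ({z : H | ⟪z - y k, v k⟫ ≤ ε k} ∩ {z : H | ⟪z - x k, x 0 - x k⟫ ≤ 0}),
          ‖p - x 0‖ ≤ ‖z - x 0‖ := by
  have hcl : ∀ k, IsClosed ({z : H | ⟪z - y k, v k⟫ ≤ ε k} ∩
      {z : H | ⟪z - x k, x 0 - x k⟫ ≤ 0}) := fun k =>
    (isClosed_le (by fun_prop) (by fun_prop)).inter (isClosed_le (by fun_prop) (by fun_prop))
  have hhalf : ∀ (a b : H) (c : ℝ), Convex ℝ {z : H | ⟪z - a, b⟫ ≤ c} := by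
    intro a b c z hz z' hz' s t hs ht hst
    simp only [Set.mem_setOf_eq] at *
    have e : s • z + t • z' - a = s • (z - a) + t • (z' - a) := by
      have : a = (s + t) • a := by rw [hst, one_smul]
      rw [smul_sub, smul_sub]
      nth_rewrite 1 [this]
      rw [add_smul]; abel
    rw [e, inner_add_left, real_inner_smul_left, real_inner_smul_left]
    have : c = s * c + t * c := by rw [← add_mul, hst, one_mul]
    rw [this]
    gcongr
  have hcv : ∀ k, Convex ℝ ({z : H | ⟪z - y k, v k⟫ ≤ ε k} ∩
      {z : H | ⟪z - x k, x 0 - x k⟫ ≤ 0}) := fun k =>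
    (hhalf _ _ _).inter (hhalf _ _ _)
  have hSH : ∀ k (z : H), (0 : H) ∈ T z → ⟪z - y k, v k⟫ ≤ ε k := by
    intro k z hz
    have h := hincl k z 0 hz
    rw [zero_sub, inner_neg_left, real_inner_comm] at h
    linarith
  have hSW : ∀ k (z : H), (0 : H) ∈ T z → ⟪z - x k, x 0 - x k⟫ ≤ 0 := by
    intro k
    induction k with
    | zero => intro z _; simp
    | succ k ih =>
      intro z hz
      have hmemk : x (k + 1) ∈ ({z : H | ⟪z - y k, v k⟫ ≤ ε k} ∩
        {z : H | ⟪z - x k, x 0 - x k⟫ ≤ 0}) := hmem k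
      have h := (norm_eq_iInf_iff_real_inner_le_zero (hcv k) (u := x 0) hmemk).1 (by
        haveI : Nonempty ↥({z : H | ⟪z - y k, v k⟫ ≤ ε k} ∩
          {z : H | ⟪z - x k, x 0 - x k⟫ ≤ 0}) := ⟨⟨_, hmemk⟩⟩
        apply le_antisymm
        · refine le_ciInf fun q => ?_
          rw [norm_sub_rev, norm_sub_rev (x 0)]
          exact hproj k q q.2.1 q.2.2
        · exact ciInf_le (f := fun q : ↥({z : H | ⟪z - y k, v k⟫ ≤ ε k} ∩
            {z : H | ⟪z - x k, x 0 - x k⟫ ≤ 0}) => ‖x 0 - (q : H)‖)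
            ⟨0, by rintro _ ⟨q, rfl⟩; exact norm_nonneg _⟩ ⟨_, hmemk⟩)
      have h2 := h z ⟨hSH k z hz, ih z hz⟩
      rwa [real_inner_comm] at h2
  intro k
  exact ⟨fun z hz => ⟨hSH k z hz, hSW k z hz⟩, ⟨x (k + 1), hmem k⟩, hcl k, hcv k,
    x (k + 1), hmem k, fun z hz => hproj k z hz.1 hz.2⟩
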